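/- Let n ≥ 1, let Γ : ℝ → M_n(ℝ) satisfy Γ(t)ᵀ = −Γ(t) for all t, let U : ℝ → M_n(ℝ) be differentiable with U'(t) = −Γ(t)U(t) and U(t)ᵀU(t) = 1 (the identity matrix) for all t, let S ∈ M_n(ℝ) be a constant matrix with Sᵀ = S, and let W : ℝ × ℝⁿ → ℝ be twice continuously differentiable in the space variables such that for all (t,y) the matrix S·HessW(t,y) is symmetric, where (HessW)_{ab} = ∂²W/∂y^a∂y^b. Define g(t) = U(t)·S·U(t)ᵀ and V(t,x) = W(t, U(t)ᵀx) + (1/2)⟨x, Γ(t)²x⟩. Then for all (t,x) ∈ ℝ × ℝⁿ, the matrix g(t)·(HessV(t,x) − Γ(t)²) is symmetric, where (HessV)_{ab} = ∂²V/∂x^a∂x^b. -/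

import Mathlib

open Matrix

/-- The Hessian in the space variables of a function `f : ℝ × ℝⁿ → ℝ`. -/
noncomputable def spaceHess (n : ℕ) (f : ℝ × (Fin n → ℝ) → ℝ) (t : ℝ)
    (x : Fin n → ℝ) : Matrix (Fin n) (Fin n) ℝ :=
  Matrix.of fun a b =>
    fderiv ℝ (fun x' : Fin n → ℝ =>
      fderiv ℝ (fun x'' : Fin n → ℝ => f (t, x'')) x' (Pi.single b 1)) x
      (Pi.single a 1)

theorem spaceHess_eq_of_hasFDerivAt (n : ℕ) (f : ℝ × (Fin n → ℝ) → ℝ) (t : ℝ)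
    (D : (Fin n → ℝ) → ((Fin n → ℝ) →L[ℝ] ℝ))
    (hD : ∀ x, HasFDerivAt (fun y : Fin n → ℝ => f (t, y)) (D x) x)
    (x : Fin n → ℝ) (D2 : (Fin n → ℝ) →L[ℝ] ((Fin n → ℝ) →L[ℝ] ℝ))
    (hD2 : HasFDerivAt D D2 x) (a b : Fin n) :
    spaceHess n f t x a b = D2 (Pi.single a 1) (Pi.single b 1) := by
  unfold spaceHess
  simp only [Matrix.of_apply]
  have h1 : (fun x' : Fin n → ℝ =>
      fderiv ℝ (fun x'' : Fin n → ℝ => f (t, x'')) x' (Pi.single b 1))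
      = fun x' => D x' (Pi.single b 1) := by
    funext x'
    rw [(hD x').fderiv]
  rw [h1, (hD2.clm_apply (hasFDerivAt_const (Pi.single b (1:ℝ)) x)).fderiv]
  simp

theorem bilin_expand (n : ℕ) (B : (Fin n → ℝ) →L[ℝ] ((Fin n → ℝ) →L[ℝ] ℝ))
    (u v : Fin n → ℝ) :
    B u v = ∑ i, ∑ j, u i * B (Pi.single i 1) (Pi.single j 1) * v j := by
  have e : ∀ u : Fin n → ℝ, u = ∑ i, u i • (Pi.single i 1 : Fin n → ℝ) := by
    intro u
    funext j
    simp [Finset.sum_apply, Pi.single_apply]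
  conv_lhs => rw [e u, e v]
  simp only [map_sum, map_smul, _root_.sum_apply, _root_.smul_apply,
    smul_eq_mul]
  rw [Finset.sum_comm]
  refine Finset.sum_congr rfl fun i _ => ?_
  try rw [Finset.mul_sum]
  refine Finset.sum_congr rfl fun j _ => ?_
  ring

theorem spaceHess_V (n : ℕ) (W V : ℝ × (Fin n → ℝ) → ℝ) (t : ℝ)
    (hW : ContDiff ℝ 2 (fun y : Fin n → ℝ => W (t, y)))
    (A G : Matrix (Fin n) (Fin n) ℝ) (hG : Gᵀ = G)
    (hV : ∀ x : Fin n → ℝ,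
      V (t, x) = W (t, Aᵀ.mulVec x) + (1/2) * (x ⬝ᵥ G.mulVec x)) (x : Fin n → ℝ) :
    spaceHess n V t x = A * spaceHess n W t (Aᵀ.mulVec x) * Aᵀ + G := by
  set w : (Fin n → ℝ) → ℝ := fun y => W (t, y) with hw
  let L : (Fin n → ℝ) →L[ℝ] (Fin n → ℝ) := LinearMap.toContinuousLinearMap (Matrix.mulVecLin Aᵀ)
  have hL : ∀ v, L v = Aᵀ.mulVec v := fun v => rfl
  -- the quadratic part as a continuous bilinear map
  let Q : (Fin n → ℝ) →L[ℝ] ((Fin n → ℝ) →L[ℝ] ℝ) :=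
    LinearMap.toContinuousLinearMap
      ((LinearMap.toContinuousLinearMap (𝕜 := ℝ) (E := Fin n → ℝ) (F' := ℝ)).toLinearMap ∘ₗ
        (Matrix.toLinearMap₂' ℝ G))
  have hQ : ∀ u v, Q u v = u ⬝ᵥ G.mulVec v := fun u v => by
    change Matrix.toLinearMap₂' ℝ G u v = _
    exact Matrix.toLinearMap₂'_apply' G u v
  have hQs : ∀ u v, Q u v = Q v u := fun u v => by
    rw [hQ, hQ, Matrix.dotProduct_mulVec, ← Matrix.mulVec_transpose, hG, dotProduct_comm]
  have hw1 : ∀ y, HasFDerivAt w (fderiv ℝ w y) y := fun y =>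
    (hW.differentiable (by norm_num) y).hasFDerivAt
  have hw2 : ∀ y, HasFDerivAt (fderiv ℝ w) (fderiv ℝ (fderiv ℝ w) y) y := fun y =>
    (((hW.fderiv_right (m := 1) (by norm_num)).differentiable (by norm_num)) y).hasFDerivAt
  let D : (Fin n → ℝ) → ((Fin n → ℝ) →L[ℝ] ℝ) := fun z => (fderiv ℝ w (L z)).comp L + Q z
  have hD : ∀ z, HasFDerivAt (fun y : Fin n → ℝ => V (t, y)) (D z) z := by
    intro z
    have e : (fun y : Fin n → ℝ => V (t, y)) = fun y => w (L y) + (1/2) * (Q y y) := by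
      funext y
      rw [hV y, hQ]
      rfl
    rw [e]
    have h1 : HasFDerivAt (fun y => w (L y)) ((fderiv ℝ w (L z)).comp L) z :=
      (hw1 (L z)).comp z L.hasFDerivAt
    have h2 := ((Q.hasFDerivAt (x := z)).clm_apply (hasFDerivAt_id z)).const_mul (1/2 : ℝ)
    refine (h1.add h2).congr_fderiv ?_
    ext1 v
    simp [D, hQs v z]
    ring
  let P := (ContinuousLinearMap.compL ℝ (Fin n → ℝ) (Fin n → ℝ) ℝ).flip L
  have hD2 : HasFDerivAt D (P.comp ((fderiv ℝ (fderiv ℝ w) (L x)).comp L) + Q) x := by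
    have h1 : HasFDerivAt (fun z => fderiv ℝ w (L z)) ((fderiv ℝ (fderiv ℝ w) (L x)).comp L) x :=
      (hw2 (L x)).comp x L.hasFDerivAt
    exact (P.hasFDerivAt.comp x h1).add Q.hasFDerivAt
  ext a b
  rw [spaceHess_eq_of_hasFDerivAt n V t D hD x _ hD2]
  have e1 : (P.comp ((fderiv ℝ (fderiv ℝ w) (L x)).comp L) + Q) (Pi.single a 1) (Pi.single b 1)
      = fderiv ℝ (fderiv ℝ w) (L x) (L (Pi.single a 1)) (L (Pi.single b 1))
        + Q (Pi.single a 1) (Pi.single b 1) := rfl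
  rw [e1, bilin_expand, hQ]
  have e2 : ∀ i j, fderiv ℝ (fderiv ℝ w) (L x) (Pi.single i 1) (Pi.single j 1)
      = spaceHess n W t (Aᵀ.mulVec x) i j := fun i j =>
    (spaceHess_eq_of_hasFDerivAt n W t (fderiv ℝ w) hw1 (L x) _ (hw2 (L x)) i j).symm
  simp only [e2]
  simp only [hL]
  simp only [Matrix.mulVec_single_one, Matrix.col_apply, Matrix.transpose_apply, Matrix.add_apply,
    Matrix.mul_apply, Finset.sum_mul, single_one_dotProduct]
  rw [Finset.sum_comm]

/- STATEMENT 18: Proposition 3. If Γ(t) is skew, U solves U' = −ΓU and is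
orthogonal, S is constant symmetric, W is C² in the space variables with
S·HessW symmetric, then g(t) = U S Uᵀ and V(t,x) = W(t,Uᵀx) + (1/2)⟨x,Γ²x⟩
satisfy: g·(HessV − Γ²) is symmetric. -/
theorem prop3_construction
    (n : ℕ) (hn : 1 ≤ n)
    (Γ U : ℝ → Matrix (Fin n) (Fin n) ℝ)
    (hΓskew : ∀ t, (Γ t)ᵀ = -Γ t)
    (hU : ∀ (t : ℝ) (i j : Fin n),
      HasDerivAt (fun s => U s i j) ((-(Γ t * U t)) i j) t)
    (hUorth : ∀ t, (U t)ᵀ * U t = 1)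
    (S : Matrix (Fin n) (Fin n) ℝ) (hS : Sᵀ = S)
    (W : ℝ × (Fin n → ℝ) → ℝ)
    (hW : ∀ t : ℝ, ContDiff ℝ 2 (fun y : Fin n → ℝ => W (t, y)))
    (hSW : ∀ (t : ℝ) (y : Fin n → ℝ),
      (S * spaceHess n W t y)ᵀ = S * spaceHess n W t y)
    (g : ℝ → Matrix (Fin n) (Fin n) ℝ)
    (hg : ∀ t, g t = U t * S * (U t)ᵀ)
    (V : ℝ × (Fin n → ℝ) → ℝ)
    (hV : ∀ (t : ℝ) (x : Fin n → ℝ),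
      V (t, x) = W (t, (U t)ᵀ.mulVec x) + (1/2) * (x ⬝ᵥ (Γ t ^ 2).mulVec x)) :
    ∀ (t : ℝ) (x : Fin n → ℝ),
      (g t * (spaceHess n V t x - Γ t ^ 2))ᵀ
        = g t * (spaceHess n V t x - Γ t ^ 2) := by
  intro t x
  have hG : (Γ t ^ 2)ᵀ = Γ t ^ 2 := by
    rw [Matrix.transpose_pow, hΓskew, neg_sq]
  rw [spaceHess_V n W V t (hW t) (U t) (Γ t ^ 2) hG (hV t) x, add_sub_cancel_right, hg]
  set H := spaceHess n W t ((U t)ᵀ.mulVec x) with hH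
  have e : U t * S * (U t)ᵀ * (U t * H * (U t)ᵀ) = U t * (S * H) * (U t)ᵀ := by
    calc _ = U t * S * ((U t)ᵀ * U t) * H * (U t)ᵀ := by simp only [Matrix.mul_assoc]
      _ = _ := by rw [hUorth, Matrix.mul_one]; simp only [Matrix.mul_assoc]
  rw [e, Matrix.transpose_mul, Matrix.transpose_mul, hSW, Matrix.transpose_transpose]
  simp only [hH, Matrix.mul_assoc]
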